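/- Let Σ be a two-dimensional Riemannian manifold with Gaussian curvature K, and let S be a symmetric traceless Codazzi (1,1)-tensor field on Σ. Then (1/2)·Δ|S|² = |∇S|² + 2K|S|². -/

import Mathlib

/-!
The connection is handled through its matrices `A_k = (Γ^i_{kj})`, so that covariant derivatives of
endomorphism fields become `D_k M = ∂_k M + [A_k, M]` and the tensor calculus becomes
noncommutative algebra. Since `D_k` is a derivation and `tr (D_k M) = ∂_k (tr M)`,

  `½ Δ|S|² = g^{ij} tr (D_i S · D_j S) + g^{ij} tr (S · ∇²_{ij} S)`.

The first term is `|∇S|²` because `D_k S` is again `g`-self-adjoint (`covD_adjoint`, from metric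
compatibility `mpd_metric`); this is `normDS2_eq`. For the second term, every `∇²_{ij} S` is
self-adjoint and traceless, and satisfies the Codazzi symmetry in its last two slots. The Ricci
identity (`ricci_identity`) gives `∇²_{01} S - ∇²_{10} S = [R, S]`, and the curvature endomorphism
`R` is skew-adjoint (`curv_skew`), hence in dimension two it is `K` times
`g⁻¹ * !![0, 1; -1, 0] * det g`. What is left is linear algebra at one point, done in
`pointwise_algebra`: it gives `g^{ij} tr (S · ∇²_{ij} S) = 2 K |S|²`.
-/

open Matrix

noncomputable section

/-- Partial derivative in the `i`-th coordinate direction of a function on ℝ². -/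
def pd (i : Fin 2) (f : (Fin 2 → ℝ) → ℝ) (x : Fin 2 → ℝ) : ℝ :=
  fderiv ℝ f x (Pi.single i 1)

/-- Inverse metric `g^{ij}`. -/
def ginv (g : (Fin 2 → ℝ) → Matrix (Fin 2) (Fin 2) ℝ) (x : Fin 2 → ℝ) :
    Matrix (Fin 2) (Fin 2) ℝ := (g x)⁻¹

/-- Christoffel symbols `Γ^k_{ij}` of the metric `g`. -/
def christoffel (g : (Fin 2 → ℝ) → Matrix (Fin 2) (Fin 2) ℝ) (k i j : Fin 2)
    (x : Fin 2 → ℝ) : ℝ :=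
  (1 / 2) * ∑ l, ginv g x k l *
    (pd i (fun y => g y j l) x + pd j (fun y => g y i l) x - pd l (fun y => g y i j) x)

/-- Curvature tensor `R^l_{ijk}` of the Levi-Civita connection of `g`. -/
def riemann (g : (Fin 2 → ℝ) → Matrix (Fin 2) (Fin 2) ℝ) (l i j k : Fin 2)
    (x : Fin 2 → ℝ) : ℝ :=
  pd i (christoffel g l j k) x - pd j (christoffel g l i k) x
    + ∑ m, christoffel g l i m x * christoffel g m j k x
    - ∑ m, christoffel g l j m x * christoffel g m i k x

/-- Gaussian curvature `K = R_{0101} / det g`. -/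
def gaussK (g : (Fin 2 → ℝ) → Matrix (Fin 2) (Fin 2) ℝ) (x : Fin 2 → ℝ) : ℝ :=
  (∑ m, g x 0 m * riemann g m 0 1 1 x) / (g x).det

/-- Covariant derivative `(∇_k S)^i_j` of a `(1,1)`-tensor field `S`. -/
def covDeriv (g : (Fin 2 → ℝ) → Matrix (Fin 2) (Fin 2) ℝ)
    (S : (Fin 2 → ℝ) → Matrix (Fin 2) (Fin 2) ℝ) (k i j : Fin 2)
    (x : Fin 2 → ℝ) : ℝ :=
  pd k (fun y => S y i j) x + ∑ l, christoffel g i k l x * S x l j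
    - ∑ l, christoffel g l k j x * S x i l

/-- Squared norm `|S|² = tr(S²)` of a `g`-self-adjoint endomorphism field. -/
def normS2 (S : (Fin 2 → ℝ) → Matrix (Fin 2) (Fin 2) ℝ) (x : Fin 2 → ℝ) : ℝ :=
  (S x * S x).trace

/-- Squared norm `|∇S|² = g_{ic} g^{jb} g^{ka} (∇_k S)^i_j (∇_a S)^c_b`. -/
def normDS2 (g S : (Fin 2 → ℝ) → Matrix (Fin 2) (Fin 2) ℝ) (x : Fin 2 → ℝ) : ℝ :=
  ∑ i, ∑ j, ∑ k, ∑ a, ∑ b, ∑ c,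
    g x i c * ginv g x j b * ginv g x k a *
      covDeriv g S k i j x * covDeriv g S a c b x

/-- Laplace–Beltrami operator `Δ f = g^{ij} (∂_i ∂_j f − Γ^k_{ij} ∂_k f)`. -/
def lapg (g : (Fin 2 → ℝ) → Matrix (Fin 2) (Fin 2) ℝ) (f : (Fin 2 → ℝ) → ℝ)
    (x : Fin 2 → ℝ) : ℝ :=
  ∑ i, ∑ j, ginv g x i j * (pd i (pd j f) x - ∑ k, christoffel g k i j x * pd k f x)

/-- A field of `2 × 2` real matrices on the coordinate plane. -/
abbrev MatField := (Fin 2 → ℝ) → Matrix (Fin 2) (Fin 2) ℝ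

/-- A matrix field is smooth when all its entries are. -/
def SmoothField (M : MatField) : Prop :=
  ∀ i j, ContDiff ℝ (⊤ : ℕ∞) fun x => M x i j

/-- Entrywise partial derivative `∂_k M` of a matrix field. -/
def mpd (k : Fin 2) (M : MatField) : MatField :=
  fun x => Matrix.of fun i j => pd k (fun y => M y i j) x

/-- The connection matrix `A_k`, with entries `(A_k)^i_j = Γ^i_{kj}`. -/
def conn (g : MatField) (k : Fin 2) : MatField :=
  fun x => Matrix.of fun i j => christoffel g i k j x

/-- The covariant derivative `∂_k M + [A_k, M]` of a `(1,1)`-tensor field along the `k`-th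
coordinate field, as a matrix field. -/
def covD (g : MatField) (k : Fin 2) (M : MatField) : MatField :=
  fun x => mpd k M x + conn g k x * M x - M x * conn g k x

/-- The curvature endomorphism `R(∂_0, ∂_1) = ∂_0 A_1 - ∂_1 A_0 + [A_0, A_1]`. -/
def curv (g : MatField) : MatField :=
  fun x => mpd 0 (conn g 1) x - mpd 1 (conn g 0) x
    + conn g 0 x * conn g 1 x - conn g 1 x * conn g 0 x

/-! ### Partial derivatives of smooth functions and matrix fields -/

lemma pd_contDiff {f : (Fin 2 → ℝ) → ℝ} (hf : ContDiff ℝ (⊤ : ℕ∞) f) (k : Fin 2) :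
    ContDiff ℝ (⊤ : ℕ∞) (pd k f) := by
  have : ContDiff ℝ (⊤ : ℕ∞) (fderiv ℝ f) := hf.fderiv_right (by simp)
  exact this.clm_apply contDiff_const

lemma pd_comm {f : (Fin 2 → ℝ) → ℝ} (hf : ContDiff ℝ (⊤ : ℕ∞) f) (i j : Fin 2)
    (x : Fin 2 → ℝ) : pd i (pd j f) x = pd j (pd i f) x := by
  have hd : DifferentiableAt ℝ (fderiv ℝ f) x :=
    ((hf.fderiv_right (m := (⊤ : ℕ∞)) (by simp)).differentiable (by simp)) x
  have key : ∀ a b : Fin 2, pd a (pd b f) x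
      = fderiv ℝ (fderiv ℝ f) x (Pi.single a 1) (Pi.single b 1) := by
    intro a b
    change fderiv ℝ (fun y => fderiv ℝ f y (Pi.single b 1)) x (Pi.single a 1) = _
    rw [fderiv_clm_apply hd (differentiableAt_const _)]
    simp
  rw [key, key]
  have hs : IsSymmSndFDerivAt ℝ f x :=
    (hf.contDiffAt).isSymmSndFDerivAt (by
      rw [minSmoothness_of_isRCLikeNormedField]
      exact WithTop.coe_le_coe.mpr (le_top : (2 : ℕ∞) ≤ ⊤))
  exact hs _ _

lemma pd_add {f h : (Fin 2 → ℝ) → ℝ} {x : Fin 2 → ℝ} (hf : DifferentiableAt ℝ f x)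
    (hh : DifferentiableAt ℝ h x) (k : Fin 2) :
    pd k (fun y => f y + h y) x = pd k f x + pd k h x := by
  unfold pd
  rw [fderiv_fun_add hf hh]; rfl

lemma pd_mul {f h : (Fin 2 → ℝ) → ℝ} {x : Fin 2 → ℝ} (hf : DifferentiableAt ℝ f x)
    (hh : DifferentiableAt ℝ h x) (k : Fin 2) :
    pd k (fun y => f y * h y) x = pd k f x * h x + f x * pd k h x := by
  unfold pd
  rw [fderiv_fun_mul hf hh]
  simp; ring

namespace SmoothField

variable {M N : MatField}

lemma diff (hM : SmoothField M) (i j : Fin 2) (x : Fin 2 → ℝ) :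
    DifferentiableAt ℝ (fun y => M y i j) x :=
  ((hM i j).differentiable (by simp)) x

lemma add (hM : SmoothField M) (hN : SmoothField N) : SmoothField fun x => M x + N x :=
  fun i j => (hM i j).add (hN i j)

lemma sub (hM : SmoothField M) (hN : SmoothField N) : SmoothField fun x => M x - N x :=
  fun i j => (hM i j).sub (hN i j)

lemma mul (hM : SmoothField M) (hN : SmoothField N) : SmoothField fun x => M x * N x := by
  intro i j
  simp only [Matrix.mul_apply]
  exact ContDiff.sum fun l _ => (hM i l).mul (hN l j)

lemma transpose (hM : SmoothField M) : SmoothField fun x => (M x)ᵀ :=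
  fun i j => hM j i

lemma mpd (hM : SmoothField M) (k : Fin 2) : SmoothField (mpd k M) :=
  fun i j => pd_contDiff (hM i j) k

end SmoothField

section Leibniz

variable {M N : MatField}

lemma mpd_add (hM : SmoothField M) (hN : SmoothField N) (k : Fin 2) (x : Fin 2 → ℝ) :
    mpd k (fun y => M y + N y) x = mpd k M x + mpd k N x := by
  ext i j
  exact pd_add (hM.diff i j x) (hN.diff i j x) k

lemma mpd_mul (hM : SmoothField M) (hN : SmoothField N) (k : Fin 2) (x : Fin 2 → ℝ) :
    mpd k (fun y => M y * N y) x = mpd k M x * N x + M x * mpd k N x := by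
  ext i j
  have h0 : ∀ l, DifferentiableAt ℝ (fun y => M y i l * N y l j) x :=
    fun l => (hM.diff i l x).mul (hN.diff l j x)
  simp only [mpd, Matrix.of_apply, Matrix.mul_apply, Matrix.add_apply, Fin.sum_univ_two]
  rw [pd_add (h0 0) (h0 1), pd_mul (hM.diff _ _ _) (hN.diff _ _ _),
    pd_mul (hM.diff _ _ _) (hN.diff _ _ _)]
  ring

lemma mpd_comm (hM : SmoothField M) (i j : Fin 2) (x : Fin 2 → ℝ) :
    mpd i (mpd j M) x = mpd j (mpd i M) x := by
  ext a b
  exact pd_comm (hM a b) i j x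

lemma mpd_sub (hM : SmoothField M) (hN : SmoothField N) (k : Fin 2) (x : Fin 2 → ℝ) :
    mpd k (fun y => M y - N y) x = mpd k M x - mpd k N x := by
  have h := mpd_add (hM.sub hN) hN k x
  simp only [sub_add_cancel] at h
  rw [eq_sub_iff_add_eq]
  exact h.symm

lemma mpd_transpose (k : Fin 2) (x : Fin 2 → ℝ) :
    mpd k (fun y => (M y)ᵀ) x = (mpd k M x)ᵀ := rfl

lemma pd_trace (hM : SmoothField M) (k : Fin 2) (x : Fin 2 → ℝ) :
    pd k (fun y => (M y).trace) x = (mpd k M x).trace := by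
  simp only [Matrix.trace, Matrix.diag, Fin.sum_univ_two]
  exact pd_add (hM.diff 0 0 x) (hM.diff 1 1 x) k

end Leibniz

/-! ### The Levi-Civita connection, its curvature, and the Ricci identity -/

section Connection

variable {g M N : MatField}

lemma ginv_smooth (hg : SmoothField g) (hgpos : ∀ x, (g x).PosDef) : SmoothField (ginv g) := by
  have hdet : ContDiff ℝ (⊤ : ℕ∞) fun x => (g x).det := by
    simp only [Matrix.det_fin_two]
    exact ((hg 0 0).mul (hg 1 1)).sub ((hg 0 1).mul (hg 1 0))
  have hinv : ContDiff ℝ (⊤ : ℕ∞) fun x => ((g x).det)⁻¹ :=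
    hdet.inv fun x => (hgpos x).det_pos.ne'
  intro i j
  simp only [ginv, Matrix.inv_def, Matrix.adjugate_fin_two, Ring.inverse_eq_inv',
    Matrix.smul_apply, smul_eq_mul]
  refine hinv.mul ?_
  fin_cases i <;> fin_cases j
  · exact hg 1 1
  · exact (hg 0 1).neg
  · exact (hg 1 0).neg
  · exact hg 0 0

lemma conn_smooth (hg : SmoothField g) (hgpos : ∀ x, (g x).PosDef) (k : Fin 2) :
    SmoothField (conn g k) := by
  intro i j
  simp only [conn, Matrix.of_apply, christoffel]
  refine contDiff_const.mul (ContDiff.sum fun l _ => (ginv_smooth hg hgpos i l).mul ?_)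
  exact ((pd_contDiff (hg _ _) _).add (pd_contDiff (hg _ _) _)).sub (pd_contDiff (hg _ _) _)

lemma covD_smooth (hg : SmoothField g) (hgpos : ∀ x, (g x).PosDef) (hM : SmoothField M)
    (k : Fin 2) : SmoothField (covD g k M) :=
  ((hM.mpd k).add ((conn_smooth hg hgpos k).mul hM)).sub (hM.mul (conn_smooth hg hgpos k))

lemma metric_symm (hgpos : ∀ x, (g x).PosDef) (x : Fin 2 → ℝ) (i j : Fin 2) :
    g x i j = g x j i := by
  have h := (hgpos x).isHermitian.apply j i
  simpa using h

lemma christoffel_symm (hgpos : ∀ x, (g x).PosDef) (k i j : Fin 2) (x : Fin 2 → ℝ) :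
    christoffel g k i j x = christoffel g k j i x := by
  have h : (fun y => g y i j) = fun y => g y j i := funext fun y => metric_symm hgpos y i j
  unfold christoffel
  simp only [h]
  congr 1
  refine Finset.sum_congr rfl fun l _ => ?_
  ring

/-- The Levi-Civita connection is metric: `∂_k g = g A_k + A_kᵀ g`. -/
lemma mpd_metric (hgpos : ∀ x, (g x).PosDef) (k : Fin 2) (x : Fin 2 → ℝ) :
    mpd k g x = g x * conn g k x + (conn g k x)ᵀ * g x := by
  -- The lowered symbol `g A_k` is half the usual combination of derivatives of `g`.
  have low : ∀ i j, (g x * conn g k x) i j = (1 / 2) *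
      (pd k (fun y => g y j i) x + pd j (fun y => g y k i) x - pd i (fun y => g y k j) x) := by
    intro i j
    have e : conn g k x = (1 / 2 : ℝ) • ((g x)⁻¹ * Matrix.of fun l j =>
        pd k (fun y => g y j l) x + pd j (fun y => g y k l) x - pd l (fun y => g y k j) x) := by
      ext a b
      simp [conn, christoffel, ginv, Matrix.mul_apply]
    rw [e, Matrix.mul_smul, ← Matrix.mul_assoc,
      Matrix.mul_nonsing_inv _ (hgpos x).det_pos.ne'.isUnit, Matrix.one_mul]
    simp
  have hT : (conn g k x)ᵀ * g x = (g x * conn g k x)ᵀ := by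
    have : (g x)ᵀ = g x := by ext i j; exact metric_symm hgpos x j i
    rw [Matrix.transpose_mul, this]
  have hs : ∀ i j : Fin 2, (fun y => g y i j) = fun y => g y j i :=
    fun i j => funext fun y => metric_symm hgpos y i j
  rw [hT]
  ext i j
  rw [Matrix.add_apply, Matrix.transpose_apply, low, low]
  simp only [mpd, Matrix.of_apply]
  rw [hs j i, hs k i, hs k j]
  ring

/-- Since the connection is metric, `R(∂_0, ∂_1)` is skew-adjoint with respect to `g`. -/
lemma curv_skew (hg : SmoothField g) (hgpos : ∀ x, (g x).PosDef) (x : Fin 2 → ℝ) :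
    g x * curv g x + (curv g x)ᵀ * g x = 0 := by
  have hA := conn_smooth hg hgpos
  have second : ∀ i j, mpd i (mpd j g) x
      = mpd i g x * conn g j x + g x * mpd i (conn g j) x
        + ((mpd i (conn g j) x)ᵀ * g x + (conn g j x)ᵀ * mpd i g x) := by
    intro i j
    have e : mpd j g = fun y => g y * conn g j y + (conn g j y)ᵀ * g y :=
      funext fun y => mpd_metric hgpos j y
    conv_lhs => rw [e]
    rw [mpd_add (hg.mul (hA j)) ((hA j).transpose.mul hg), mpd_mul hg (hA j),
      mpd_mul (hA j).transpose hg, mpd_transpose]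
  have h := mpd_comm hg 0 1 x
  rw [second, second, mpd_metric hgpos, mpd_metric hgpos] at h
  have h' := sub_eq_zero.mpr h
  rw [← h']
  simp only [curv, Matrix.transpose_add, Matrix.transpose_sub, Matrix.transpose_mul]
  noncomm_ring

lemma covD_adjoint (hg : SmoothField g) (hgpos : ∀ x, (g x).PosDef) (hM : SmoothField M)
    (hsym : ∀ x, g x * M x = (M x)ᵀ * g x) (k : Fin 2) (x : Fin 2 → ℝ) :
    g x * covD g k M x = (covD g k M x)ᵀ * g x := by
  have e : (fun y => g y * M y) = fun y => (M y)ᵀ * g y := funext hsym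
  have h : mpd k (fun y => g y * M y) x = mpd k (fun y => (M y)ᵀ * g y) x := by rw [e]
  rw [mpd_mul hg hM, mpd_mul hM.transpose hg, mpd_transpose, mpd_metric hgpos] at h
  simp only [covD, Matrix.transpose_add, Matrix.transpose_sub, Matrix.transpose_mul]
  have h1 : g x * M x * conn g k x = (M x)ᵀ * g x * conn g k x := by rw [hsym]
  have h2 : (conn g k x)ᵀ * (g x * M x) = (conn g k x)ᵀ * ((M x)ᵀ * g x) := by rw [hsym]
  have h' := sub_eq_zero.mpr h
  have h1' := sub_eq_zero.mpr h1
  have h2' := sub_eq_zero.mpr h2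
  rw [← sub_eq_zero]
  have c := congrArg₂ (· - ·) (congrArg₂ (· - ·) h' h1') h2'
  simp only [sub_zero] at c
  rw [← c]
  noncomm_ring

lemma trace_covD (hM : SmoothField M) (k : Fin 2) (x : Fin 2 → ℝ) :
    (covD g k M x).trace = pd k (fun y => (M y).trace) x := by
  rw [pd_trace hM, covD, Matrix.trace_sub, Matrix.trace_add, Matrix.trace_mul_comm (M x)]
  ring

/-- The covariant derivative is a derivation of the algebra of endomorphism fields. -/
lemma covD_mul (hM : SmoothField M) (hN : SmoothField N) (k : Fin 2) (x : Fin 2 → ℝ) :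
    covD g k (fun y => M y * N y) x = covD g k M x * N x + M x * covD g k N x := by
  simp only [covD]
  rw [mpd_mul hM hN]
  noncomm_ring

lemma pd_trace_mul (hM : SmoothField M) (hN : SmoothField N) (k : Fin 2) (x : Fin 2 → ℝ) :
    pd k (fun y => (M y * N y).trace) x
      = (covD g k M x * N x).trace + (M x * covD g k N x).trace := by
  rw [← Matrix.trace_add, ← covD_mul hM hN, trace_covD (hM.mul hN)]

/-- The Ricci identity `[D_0, D_1] M = [R(∂_0, ∂_1), M]`. -/
lemma ricci_identity (hg : SmoothField g) (hgpos : ∀ x, (g x).PosDef) (hM : SmoothField M)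
    (x : Fin 2 → ℝ) :
    covD g 0 (covD g 1 M) x - covD g 1 (covD g 0 M) x
      = curv g x * M x - M x * curv g x := by
  have hA := conn_smooth hg hgpos
  have e : ∀ i j, mpd i (covD g j M) x = mpd i (mpd j M) x
      + (mpd i (conn g j) x * M x + conn g j x * mpd i M x)
      - (mpd i M x * conn g j x + M x * mpd i (conn g j) x) := by
    intro i j
    unfold covD
    rw [mpd_sub ((hM.mpd j).add ((hA j).mul hM)) (hM.mul (hA j)),
      mpd_add (hM.mpd j) ((hA j).mul hM), mpd_mul (hA j) hM, mpd_mul hM (hA j)]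
  have l : ∀ i j, covD g i (covD g j M) x = mpd i (covD g j M) x
      + conn g i x * covD g j M x - covD g j M x * conn g i x := fun _ _ => rfl
  rw [l, l, e, e, mpd_comm hM 0 1]
  simp only [covD, curv]
  noncomm_ring

end Connection

/-! ### Tensor algebra at a point -/

/-- The second covariant derivative `∇²_{ij} M = D_i D_j M - Γ^k_{ij} D_k M`. -/
def hess (g M : MatField) (i j : Fin 2) : MatField :=
  fun x => covD g i (covD g j M) x - ∑ k, christoffel g k i j x • covD g k M x

/-- The two-dimensional tensor algebra behind the formula at a point. Here `G` is the metric, `S` a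
traceless self-adjoint endomorphism, `R` the curvature endomorphism, and `U i j` stands for
`∇²_{ij} S`. By the Codazzi symmetry `hcod`, the metric trace of `U` equals, up to the commutator
`[R, S]`, the derivative of the divergence of `S`, which vanishes because `S` is traceless. -/
lemma pointwise_algebra (G S R : Matrix (Fin 2) (Fin 2) ℝ)
    (U : Fin 2 → Fin 2 → Matrix (Fin 2) (Fin 2) ℝ) (hG : G.PosDef)
    (hS : G * S = Sᵀ * G) (hStr : S.trace = 0)
    (hR : G * R + Rᵀ * G = 0)
    (hU : ∀ i j, G * U i j = (U i j)ᵀ * G) (hUtr : ∀ i j, (U i j).trace = 0)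
    (hcod : ∀ i j a b, U i j a b = U i b a j)
    (hric : U 0 1 - U 1 0 = R * S - S * R) :
    ∑ i, ∑ j, G⁻¹ i j * (S * U i j).trace
      = 2 * ((∑ m, G 0 m * R m 1) / G.det) * (S * S).trace := by
  have hdet : G.det ≠ 0 := hG.det_pos.ne'
  have ha : G 0 0 ≠ 0 := (hG.diag_pos (i := 0)).ne'
  have hG10 : G 1 0 = G 0 1 := by simpa using hG.isHermitian.apply 0 1
  -- A traceless self-adjoint endomorphism is determined by its first column.
  have col : ∀ M : Matrix (Fin 2) (Fin 2) ℝ, G * M = Mᵀ * G → M.trace = 0 →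
      M 1 1 = -M 0 0 ∧ M 0 1 = (2 * G 0 1 * M 0 0 + G 1 1 * M 1 0) / G 0 0 := by
    intro M hM ht
    have h1 : M 1 1 = -M 0 0 := by
      rw [Matrix.trace_fin_two] at ht; linarith
    refine ⟨h1, ?_⟩
    have h := congrFun (congrFun hM 0) 1
    simp only [Matrix.mul_apply, Fin.sum_univ_two, Matrix.transpose_apply, h1] at h
    rw [eq_div_iff ha]
    linarith
  -- A skew-adjoint endomorphism is a multiple of `G⁻¹ * !![0, 1; -1, 0]`.
  obtain ⟨κ, hκ⟩ : ∃ κ, κ = (∑ m, G 0 m * R m 1) / G.det := ⟨_, rfl⟩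
  have hk : κ * (G 0 0 * G 1 1 - G 0 1 * G 0 1) = G 0 0 * R 0 1 + G 0 1 * R 1 1 := by
    have hd : G.det = G 0 0 * G 1 1 - G 0 1 * G 0 1 := by rw [Matrix.det_fin_two, hG10]
    rw [hκ, ← hd, div_mul_cancel₀ _ hdet, Fin.sum_univ_two]
  rw [← hκ]
  rw [Matrix.det_fin_two, hG10] at hdet
  have r00 := congrFun (congrFun hR 0) 0
  have r01 := congrFun (congrFun hR 0) 1
  have r11 := congrFun (congrFun hR 1) 1
  simp only [Matrix.mul_apply, Matrix.add_apply, Fin.sum_univ_two, Matrix.transpose_apply,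
    Matrix.zero_apply, hG10] at r00 r01 r11
  have R00 : R 0 0 = κ * G 0 1 := by
    apply mul_left_cancel₀ hdet
    linear_combination (G 1 1 / 2) * r00 - G 0 1 * r01 - G 0 1 * hk
  have R10 : R 1 0 = -(κ * G 0 0) := by
    apply mul_left_cancel₀ hdet
    linear_combination (-G 0 1 / 2) * r00 + G 0 0 * r01 + G 0 0 * hk
  have R01 : R 0 1 = κ * G 1 1 := by
    apply mul_left_cancel₀ hdet
    linear_combination (-G 0 1 / 2) * r11 - G 1 1 * hk
  have R11 : R 1 1 = -(κ * G 0 1) := by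
    apply mul_left_cancel₀ hdet
    linear_combination (G 0 0 / 2) * r11 + G 0 1 * hk
  obtain ⟨S11, S01⟩ := col S hS hStr
  have U11 := fun i j => (col _ (hU i j) (hUtr i j)).1
  have U01 := fun i j => (col _ (hU i j) (hUtr i j)).2
  -- The Codazzi symmetry expresses `U i 1` through `U i 0`.
  have V00 : ∀ i, U i 1 0 0 = (2 * G 0 1 * U i 0 0 0 + G 1 1 * U i 0 1 0) / G 0 0 :=
    fun i => (hcod i 1 0 0).trans (U01 i 0)
  have V10 : ∀ i, U i 1 1 0 = -U i 0 0 0 := fun i => (hcod i 1 1 0).trans (U11 i 0)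
  have c00 := congrFun (congrFun hric 0) 0
  have c10 := congrFun (congrFun hric 1) 0
  simp only [Matrix.mul_apply, Matrix.sub_apply, Fin.sum_univ_two, R00, R01, R10, R11,
    S11, S01, V00, V10] at c00 c10
  have W0 : U 1 0 0 0 = _ := eq_sub_of_add_eq (sub_eq_iff_eq_add'.mp c00).symm
  have W1 : U 1 0 1 0 = _ := eq_sub_of_add_eq (sub_eq_iff_eq_add'.mp c10).symm
  rw [Matrix.inv_def, Matrix.adjugate_fin_two, Matrix.det_fin_two, Ring.inverse_eq_inv', hG10]
  simp only [Matrix.trace_fin_two, Matrix.mul_apply, Fin.sum_univ_two, Matrix.smul_apply,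
    smul_eq_mul, Matrix.of_apply, Matrix.cons_val_zero, Matrix.cons_val_one, Matrix.cons_val',
    U11, U01, V00, V10, W0, W1, S11, S01]
  have hdet' : G 0 0 * G 1 1 - G 0 1 ^ 2 ≠ 0 := by rwa [sq]
  field_simp
  ring

lemma normDS2_eq {g S : MatField} (hgpos : ∀ x, (g x).PosDef)
    (hsym : ∀ k x, g x * covD g k S x = (covD g k S x)ᵀ * g x) (x : Fin 2 → ℝ) :
    normDS2 g S x
      = ∑ i, ∑ j, ginv g x i j * (covD g i S x * covD g j S x).trace := by
  have hcov : ∀ k i j, covDeriv g S k i j x = covD g k S x i j := by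
    intro k i j
    simp only [covD, covDeriv, mpd, conn, Matrix.sub_apply, Matrix.add_apply, Matrix.of_apply,
      Matrix.mul_apply, mul_comm (S x i _)]
  have hinv : ginv g x * g x = 1 := Matrix.nonsing_inv_mul _ (hgpos x).det_pos.ne'.isUnit
  -- Self-adjointness of `D_a S` says that raising and lowering its indices transposes it.
  have hflip : ∀ a, covD g a S x = ginv g x * ((covD g a S x)ᵀ * g x) := by
    intro a
    rw [← hsym, ← Matrix.mul_assoc, hinv, Matrix.one_mul]
  have e : ∀ k a, (covD g k S x * covD g a S x).trace
      = (covD g k S x * (ginv g x * ((covD g a S x)ᵀ * g x))).trace := by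
    intro k a
    rw [← hflip]
  simp only [e, normDS2, hcov]
  simp only [Matrix.trace_fin_two, Matrix.mul_apply, Fin.sum_univ_two, Matrix.transpose_apply,
    metric_symm hgpos x 1 0]
  ring

/-! ### The Simons-type formula -/

/-- Simons-type formula, in local coordinates on a Riemannian
2-manifold with metric `g`: if `S` is a smooth `g`-symmetric traceless Codazzi
`(1,1)`-tensor field, then `(1/2)·Δ|S|² = |∇S|² + 2K|S|²`. -/
theorem stmt9 (g S : (Fin 2 → ℝ) → Matrix (Fin 2) (Fin 2) ℝ)
    (hg : ∀ i j, ContDiff ℝ (⊤ : ℕ∞) fun x => g x i j)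
    (hgpos : ∀ x, (g x).PosDef)
    (hSsmooth : ∀ i j, ContDiff ℝ (⊤ : ℕ∞) fun x => S x i j)
    (hSsym : ∀ x, (g x * S x)ᵀ = g x * S x)
    (hStr : ∀ x, (S x).trace = 0)
    (hCodazzi : ∀ x i j k, covDeriv g S k i j x = covDeriv g S j i k x) :
    ∀ x, (1 / 2) * lapg g (normS2 S) x =
      normDS2 g S x + 2 * gaussK g x * normS2 S x := by
  intro x
  have hg' : SmoothField g := hg
  have hS' : SmoothField S := hSsmooth
  have hgt : ∀ x, (g x)ᵀ = g x := fun x => by ext i j; exact metric_symm hgpos x j i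
  have hadj : ∀ x, g x * S x = (S x)ᵀ * g x := fun x => by
    rw [← hSsym x, Matrix.transpose_mul, hgt]
  have hT := fun k => covD_smooth hg' hgpos hS' k
  have hTadj := covD_adjoint hg' hgpos hS' hadj
  have hTtr : ∀ k x, (covD g k S x).trace = 0 := by
    intro k x
    rw [trace_covD hS']
    simp [hStr, pd]
  have hcov : ∀ k i j x, covD g k S x i j = covDeriv g S k i j x := by
    intro k i j x
    simp only [covD, covDeriv, mpd, conn, Matrix.sub_apply, Matrix.add_apply, Matrix.of_apply,
      Matrix.mul_apply, mul_comm (S x i _)]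
  have hcod : ∀ k i j x, covD g k S x i j = covD g j S x i k := by
    intro k i j x
    rw [hcov, hcov, hCodazzi]
  -- First and second derivatives of `|S|²`.
  have hF : ∀ k, pd k (normS2 S) = fun y => 2 * (S y * covD g k S y).trace := by
    intro k
    funext y
    have := pd_trace_mul (g := g) hS' hS' k y
    rw [Matrix.trace_mul_comm (covD g k S y)] at this
    change pd k (fun y => (S y * S y).trace) y = _
    rw [this]; ring
  have hFF : ∀ i j, pd i (pd j (normS2 S)) x - ∑ k, christoffel g k i j x * pd k (normS2 S) x
      = 2 * ((covD g i S x * covD g j S x).trace + (S x * hess g S i j x).trace) := by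
    intro i j
    have h2 : (fun y => 2 * (S y * covD g j S y).trace)
        = fun y => (S y * covD g j S y).trace + (S y * covD g j S y).trace := by
      funext y; ring
    have hd : DifferentiableAt ℝ (fun y => (S y * covD g j S y).trace) x := by
      simp only [Matrix.trace, Matrix.diag, Fin.sum_univ_two]
      exact ((hS'.mul (hT j)).diff 0 0 x).add ((hS'.mul (hT j)).diff 1 1 x)
    rw [hF j, h2, pd_add hd hd, pd_trace_mul (g := g) hS' (hT j)]
    simp only [hF, hess, Fin.sum_univ_two, Matrix.mul_sub, Matrix.mul_add, Matrix.trace_sub,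
      Matrix.trace_add, Matrix.mul_smul, Matrix.trace_smul, smul_eq_mul]
    ring
  have hkey := pointwise_algebra (g x) (S x) (curv g x) (fun i j => hess g S i j x) (hgpos x)
    (hadj x) (hStr x) (curv_skew hg' hgpos x)
    (by
      intro i j
      simp only [hess, Fin.sum_univ_two, Matrix.mul_sub, Matrix.mul_add, Matrix.mul_smul,
        Matrix.transpose_sub, Matrix.transpose_add, Matrix.transpose_smul, Matrix.sub_mul,
        Matrix.add_mul, Matrix.smul_mul]
      rw [covD_adjoint hg' hgpos (hT j) (hTadj j), hTadj, hTadj])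
    (by
      intro i j
      have : (covD g i (covD g j S) x).trace = 0 := by
        rw [trace_covD (hT j)]
        simp [hTtr, pd]
      simp [hess, this, hTtr])
    (by
      intro i j a b
      have hd : pd i (fun y => covD g j S y a b) x = pd i (fun y => covD g b S y a j) x := by
        simp only [hcod j a b]
      have l : ∀ j b, covD g i (covD g j S) x a b = pd i (fun y => covD g j S y a b) x
          + ∑ c, christoffel g a i c x * covD g j S x c b
          - ∑ c, covD g j S x a c * christoffel g c i b x := by
        intro j b
        rfl
      simp only [hess, Matrix.sub_apply, Matrix.sum_apply, Matrix.smul_apply, smul_eq_mul]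
      rw [l, l, hd]
      simp only [Fin.sum_univ_two]
      rw [hcod j 0 b, hcod j 1 b, hcod j a 0, hcod j a 1, hcod b a 0, hcod b a 1]
      ring)
    (by
      rw [← ricci_identity hg' hgpos hS']
      simp only [hess, christoffel_symm hgpos _ 1 0, sub_sub_sub_cancel_right])
  have hK : gaussK g x = (∑ m, g x 0 m * curv g x m 1) / (g x).det := rfl
  rw [normDS2_eq hgpos hTadj, hK]
  change _ = _ + 2 * _ * (S x * S x).trace
  rw [← hkey]
  simp only [lapg, hFF]
  simp only [Fin.sum_univ_two, ginv]
  ring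

end
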